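/- arXiv:2202.09402 — 4 statements merged into one kernel-verified Lean document; each statement's English description precedes it below -/
import Mathlib

section
/- If the safety-function iteration stabilizes at step K, i.e. U_{K+1} = U_K, then U_∞ := U_K is a fixed point of the safety operator T, and it is the least nonnegative fixed point: every function V : Fin N → ℝ with 0 ≤ V pointwise and T V = V satisfies U_∞(i) ≤ V(i) for all i. -/
/-- The safety operator of the partial control method:
`(T U) i = max_{s} min_{j} max (‖f (q i) + ξ s - q j‖) (U j)`. -/
noncomputable def safetyOp {X : Type*} [NormedAddCommGroup X] {N M : ℕ}
    [NeZero N] [NeZero M] (q : Fin N → X) (f : X → X) (ξ : Fin M → X)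
    (U : Fin N → ℝ) : Fin N → ℝ :=
  fun i => Finset.univ.sup' Finset.univ_nonempty fun s : Fin M =>
    Finset.univ.inf' Finset.univ_nonempty fun j : Fin N =>
      max ‖f (q i) + ξ s - q j‖ (U j)

/-- The safety-function iterates: `U₀ = 0` and `U_{k+1} = T U_k`. -/
noncomputable def safetyIter {X : Type*} [NormedAddCommGroup X] {N M : ℕ}
    [NeZero N] [NeZero M] (q : Fin N → X) (f : X → X) (ξ : Fin M → X) :
    ℕ → Fin N → ℝ
  | 0 => 0
  | k + 1 => safetyOp q f ξ (safetyIter q f ξ k)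

section SafetyOp

variable {X : Type*} [NormedAddCommGroup X] {N M : ℕ} [NeZero N] [NeZero M]
  (q : Fin N → X) (f : X → X) (ξ : Fin M → X)

theorem safetyOp_monotone : Monotone (safetyOp q f ξ) := fun _ _ hUV _ =>
  Finset.sup'_mono_fun fun _ _ => Finset.inf'_mono_fun fun j _ => max_le_max_left _ (hUV j)

theorem safetyOp_nonneg (U : Fin N → ℝ) : 0 ≤ safetyOp q f ξ U := fun _ =>
  Finset.le_sup'_of_le _ (Finset.mem_univ 0) <|
    Finset.le_inf' _ _ fun _ _ => le_max_of_le_left (norm_nonneg _)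

variable {q f ξ}

theorem safetyIter_le_of_safetyOp_le {V : Fin N → ℝ} (hV : safetyOp q f ξ V ≤ V) (k : ℕ) :
    safetyIter q f ξ k ≤ V :=
  have zero_le_V : safetyIter q f ξ 0 ≤ V := (safetyOp_nonneg q f ξ V).trans hV
  (safetyOp_monotone q f ξ).seq_le_seq (y := fun _ => V) k zero_le_V
    (fun _ _ => le_rfl) (fun _ _ => hV)

end SafetyOp

/-- If the iteration stabilizes at step `K`, then `U_∞ := U_K` is a fixed point of the
safety operator, and the least nonnegative one. -/
theorem safetyIter_stabilized_least_fixed_point {X : Type*} [NormedAddCommGroup X]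
    {N M : ℕ} [NeZero N] [NeZero M] (q : Fin N → X) (f : X → X) (ξ : Fin M → X)
    (K : ℕ) (hK : safetyIter q f ξ (K + 1) = safetyIter q f ξ K) :
    safetyOp q f ξ (safetyIter q f ξ K) = safetyIter q f ξ K ∧
    ∀ V : Fin N → ℝ, (∀ i, 0 ≤ V i) → safetyOp q f ξ V = V →
      ∀ i, safetyIter q f ξ K i ≤ V i :=
  ⟨hK, fun _ _ hV => safetyIter_le_of_safetyOp_le hV.le K⟩
end

section
/- Optimality of the safety function against all control strategies: fix u₀ ≥ 0 and i₀ ∈ Fin N. Suppose there is a control strategy σ : List (Fin M) → Fin N with σ([]) = i₀ such that for every infinite disturbance sequence s : ℕ → Fin M and every n ∈ ℕ, ‖f (q (σ (first n values of s))) + ξ (s n) − q (σ (first n+1 values of s))‖ ≤ u₀. Then U_k(i₀) ≤ u₀ for every k ∈ ℕ. -/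
/-!
The grid indices that a strategy attaining the bound `u₀` visits along all finite disturbance
histories form a safe set: extending the history by one disturbance names an admissible successor,
because every finite history is the beginning of some infinite disturbance sequence.
If `U ≤ u₀` on a safe set, then `T U ≤ u₀` there as well, since the minimum over `j` can be tested
at a successor inside the set; so all iterates of `0` are at most `u₀` on it.
-/

/-- Safe sets of the partial control method, on the grid indices: whatever the disturbance, a
control of size at most `u` brings the trajectory from any point of `S` to a point of `S`.
As in `safetyOp`, the control is not a separate variable but the discrepancy between the
disturbed image of the current grid point and the next grid point. -/
def IsSafeSet {X ι κ : Type*} [SeminormedAddCommGroup X] (q : ι → X) (f : X → X) (ξ : κ → X)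
    (u : ℝ) (S : Set ι) : Prop :=
  ∀ i ∈ S, ∀ s, ∃ j ∈ S, ‖f (q i) + ξ s - q j‖ ≤ u

theorem isSafeSet_range_of_forall_append {X ι κ : Type*} [SeminormedAddCommGroup X]
    {q : ι → X} {f : X → X} {ξ : κ → X} {u : ℝ} {σ : List κ → ι}
    (hσ : ∀ l s, ‖f (q (σ l)) + ξ s - q (σ (l ++ [s]))‖ ≤ u) :
    IsSafeSet q f ξ u (Set.range σ) := by
  rintro _ ⟨l, rfl⟩ s
  exact ⟨σ (l ++ [s]), Set.mem_range_self _, hσ l s⟩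

section SafetyFunction

variable {X : Type*} [NormedAddCommGroup X] {N M : ℕ} [NeZero N] [NeZero M]
  {q : Fin N → X} {f : X → X} {ξ : Fin M → X} {u : ℝ}

theorem safetyOp_le_iff {U : Fin N → ℝ} {i : Fin N} :
    safetyOp q f ξ U i ≤ u ↔ ∀ s, ∃ j, ‖f (q i) + ξ s - q j‖ ≤ u ∧ U j ≤ u := by
  simp only [safetyOp, Finset.sup'_le_iff, Finset.inf'_le_iff, Finset.mem_univ, max_le_iff,
    true_and, forall_const]

namespace IsSafeSet

variable {S : Set (Fin N)}

theorem safetyOp_le (hS : IsSafeSet q f ξ u S) {U : Fin N → ℝ} (hU : ∀ i ∈ S, U i ≤ u) :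
    ∀ i ∈ S, safetyOp q f ξ U i ≤ u := by
  intro i hi
  refine safetyOp_le_iff.2 fun s => ?_
  obtain ⟨j, hj, hij⟩ := hS i hi s
  exact ⟨j, hij, hU j hj⟩

theorem safetyIter_le (hS : IsSafeSet q f ξ u S) (hu : 0 ≤ u) (k : ℕ) :
    ∀ i ∈ S, safetyIter q f ξ k i ≤ u := by
  induction k with
  | zero => exact fun _ _ => hu
  | succ k ih => exact hS.safetyOp_le ih

end IsSafeSet

end SafetyFunction

theorem exists_seq_ofFn_eq_and_apply_length_eq {α : Type*} (l : List α) (a : α) :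
    ∃ s : ℕ → α, (List.ofFn fun m : Fin l.length => s m) = l ∧ s l.length = a :=
  ⟨fun n => l.getD n a, by simp, by simp⟩

theorem forall_seq_ofFn_iff {α : Type*} {P : List α → α → Prop} :
    (∀ (s : ℕ → α) (n : ℕ), P (List.ofFn fun m : Fin n => s m) (s n)) ↔ ∀ l a, P l a := by
  refine ⟨fun h l a => ?_, fun h s n => h _ _⟩
  obtain ⟨s, hl, ha⟩ := exists_seq_ofFn_eq_and_apply_length_eq l a
  simpa only [hl, ha] using h s l.length

/-- Optimality of the safety function against all control strategies: if some strategy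
`σ` keeps the one-step control below `u₀` against every disturbance sequence, then all
safety-function iterates at the starting index are at most `u₀`. -/
theorem safetyIter_le_of_strategy {X : Type*} [NormedAddCommGroup X]
    {N M : ℕ} [NeZero N] [NeZero M] (q : Fin N → X) (f : X → X) (ξ : Fin M → X)
    (u₀ : ℝ) (hu₀ : 0 ≤ u₀) (i₀ : Fin N)
    (σ : List (Fin M) → Fin N) (hσ₀ : σ [] = i₀)
    (hσ : ∀ (s : ℕ → Fin M) (n : ℕ),
      ‖f (q (σ (List.ofFn fun m : Fin n => s m))) + ξ (s n)
        - q (σ (List.ofFn fun m : Fin (n + 1) => s m))‖ ≤ u₀) :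
    ∀ k : ℕ, safetyIter q f ξ k i₀ ≤ u₀ := by
  have hstep : ∀ l a, ‖f (q (σ l)) + ξ a - q (σ (l ++ [a]))‖ ≤ u₀ :=
    forall_seq_ofFn_iff.1 fun s n => by
      simpa only [List.ofFn_succ_last, Fin.val_castSucc, Fin.val_last] using hσ s n
  exact fun k => (isSafeSet_range_of_forall_append hstep).safetyIter_le hu₀ k i₀ ⟨[], hσ₀⟩
end

section
/- Refining the grid does not increase the safety function: let q : Fin N → X and q' : Fin N' → X be two grids such that q factors through q', i.e. there is a map ι : Fin N → Fin N' with q = q' ∘ ι. Let (U_k) and (U'_k) be the safety-function iterates built with the same map f and disturbance family ξ on the grids q and q' respectively. Then U'_k(ι i) ≤ U_k(i) for every k ∈ ℕ and every i ∈ Fin N. -/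
/-!
Restricting functions along `ι` intertwines the safety operators up to an inequality: restricting
after applying the fine operator gives at most the coarse operator applied to the restriction,
because the fine minimum also ranges over the coarse points. As the coarse operator is monotone,
the inequality passes to all iterates.
-/

section SafetyOperator

variable {X : Type*} [NormedAddCommGroup X] {N N' M : ℕ} [NeZero N] [NeZero N'] [NeZero M]

theorem safetyOp_mono (q : Fin N → X) (f : X → X) (ξ : Fin M → X) :
    Monotone (safetyOp q f ξ) := fun _ _ hUV _ =>
  Finset.sup'_mono_fun fun _ _ =>
    Finset.inf'_mono_fun fun j _ => max_le_max_left _ (hUV j)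

theorem safetyOp_comp_le (q' : Fin N' → X) (f : X → X) (ξ : Fin M → X) (ι : Fin N → Fin N')
    (U : Fin N' → ℝ) :
    safetyOp q' f ξ U ∘ ι ≤ safetyOp (q' ∘ ι) f ξ (U ∘ ι) := fun _ =>
  Finset.sup'_mono_fun fun _ _ =>
    Finset.le_inf' _ _ fun j _ => Finset.inf'_le _ (Finset.mem_univ (ι j))

theorem safetyOp_iterate_comp_le (q' : Fin N' → X) (f : X → X) (ξ : Fin M → X)
    (ι : Fin N → Fin N') (k : ℕ) (U : Fin N' → ℝ) :
    (safetyOp q' f ξ)^[k] U ∘ ι ≤ (safetyOp (q' ∘ ι) f ξ)^[k] (U ∘ ι) :=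
  (safetyOp_mono (q' ∘ ι) f ξ).le_iterate_comp_of_le (g := safetyOp q' f ξ) (h := (· ∘ ι))
    (safetyOp_comp_le q' f ξ ι) k U

theorem safetyIter_eq_iterate (q : Fin N → X) (f : X → X) (ξ : Fin M → X) (k : ℕ) :
    safetyIter q f ξ k = (safetyOp q f ξ)^[k] 0 := by
  induction k with
  | zero => rfl
  | succ k ih => rw [safetyIter, ih, Function.iterate_succ_apply']

end SafetyOperator

/-- Refining the grid does not increase the safety function: if the grid `q` factors
through the finer grid `q'`, the safety-function iterates on `q'` are bounded, along the
embedding, by those on `q`. -/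
theorem safetyIter_anti_in_grid {X : Type*} [NormedAddCommGroup X]
    {N N' M : ℕ} [NeZero N] [NeZero N'] [NeZero M] (f : X → X) (ξ : Fin M → X)
    (q : Fin N → X) (q' : Fin N' → X) (ι : Fin N → Fin N') (hι : q = q' ∘ ι) :
    ∀ (k : ℕ) (i : Fin N), safetyIter q' f ξ k (ι i) ≤ safetyIter q f ξ k i := by
  subst hι
  intro k i
  simpa only [safetyIter_eq_iterate, Function.comp_apply, Pi.zero_comp] using
    safetyOp_iterate_comp_le q' f ξ ι k 0 i
end

section
/- Escape to infinity for the Lozi map with a = 2, b = 0.5: let (x_n, y_n) = L^[n](x₀, y₀). If x₀ ≤ −1 and y₀ ≤ −1, then for every n one has x_{n+1} ≤ x_n − 0.5, and the first-coordinate sequence (x_n) tends to −∞ (tends to atBot); in particular the orbit leaves the square Q = [−4,4] × [−4,4]. -/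
/-- The Lozi map with parameters `a = 2`, `b = 0.5`. -/
noncomputable def lozi : ℝ × ℝ → ℝ × ℝ := fun p => (1 - 2 * |p.1| + 0.5 * p.2, p.1)

/-!
On the left half-plane the Lozi map with parameters `a`, `b` is affine and, if `a + b > 1`, has the
fixed point with both coordinates `-1 / (a + b - 1)`. If moreover `a ≥ 1` and `b ≥ 0`, then at every
point of a lower-left quadrant with corner `(-c, -c)` strictly below that fixed point the first
coordinate drops by at least `c * (a + b - 1) - 1 > 0`. As the second coordinate of the image is the
old first coordinate, the quadrant is mapped into itself, so the drop recurs at every step.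
-/

open Filter Set

theorem tendsto_atBot_of_succ_le_sub {G : Type*} [AddCommGroup G] [LinearOrder G]
    [IsOrderedAddMonoid G] [Archimedean G] {u : ℕ → G} {δ : G} (hδ : 0 < δ)
    (hu : ∀ n, u (n + 1) ≤ u n - δ) : Tendsto u atTop atBot := by
  have hanti : Antitone fun n => u n + n • δ := antitone_nat_of_succ_le fun n => by
    rw [succ_nsmul', ← add_assoc]
    exact add_le_add_left (le_sub_iff_add_le.mp (hu n)) _
  have hbound (n : ℕ) : u n ≤ u 0 + -(n • δ) := by
    simpa [← sub_eq_add_neg, le_sub_iff_add_le] using hanti n.zero_le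
  have hlim : Tendsto (fun n : ℕ => n • δ) atTop atTop := tendsto_id.atTop_nsmul_const hδ
  exact tendsto_atBot_mono hbound
    (tendsto_atBot_add_const_left _ _ (tendsto_neg_atTop_atBot.comp hlim))

theorem eventually_notMem_of_tendsto_fst_atBot {ι α β : Type*} [Preorder α] [NoMinOrder α]
    [Preorder β] {l : Filter ι} {u : ι → α × β} (hu : Tendsto (fun i => (u i).1) l atBot)
    {s : Set (α × β)} (hs : BddBelow s) : ∀ᶠ i in l, u i ∉ s := by
  obtain ⟨m, hm⟩ := hs
  filter_upwards [hu.eventually_lt_atBot m.1] with i hi hmem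
  exact hi.not_ge (hm hmem).1

/-- The Lozi map with arbitrary parameters, for studying how escape depends on `a` and `b`; it keeps
the normalization of `lozi`, with `1` as constant term and `b` as coefficient of the second
coordinate. -/
noncomputable def loziMap (a b : ℝ) (p : ℝ × ℝ) : ℝ × ℝ := (1 - a * |p.1| + b * p.2, p.1)

theorem lozi_eq_loziMap : lozi = loziMap 2 0.5 := rfl

section loziMap

variable {a b c δ : ℝ} {p : ℝ × ℝ}

theorem loziMap_fst_le_sub (ha : 1 ≤ a) (hb : 0 ≤ b) (hδ : 0 ≤ δ) (hc : 1 + δ ≤ c * (a + b - 1))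
    (hp : p ≤ (-c, -c)) : (loziMap a b p).1 ≤ p.1 - δ := by
  obtain ⟨hx, hy⟩ : p.1 ≤ -c ∧ p.2 ≤ -c := hp
  have : 0 ≤ a - 1 := sub_nonneg.mpr ha
  have hc₀ : 0 < c := pos_of_mul_pos_left (by linarith) (by linarith : 0 ≤ a + b - 1)
  have hx₀ : p.1 ≤ 0 := by linarith
  calc (loziMap a b p).1
      = p.1 + (1 + (a - 1) * p.1 + b * p.2) := by
        rw [loziMap, abs_of_nonpos hx₀]
        ring
    _ ≤ p.1 + (1 + (a - 1) * -c + b * -c) := by gcongr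
    _ ≤ p.1 - δ := by linarith

theorem mapsTo_loziMap_Iic (ha : 1 ≤ a) (hb : 0 ≤ b) (hc : 1 ≤ c * (a + b - 1)) :
    MapsTo (loziMap a b) (Iic (-c, -c)) (Iic (-c, -c)) := by
  intro p hp
  have hfst : (loziMap a b p).1 ≤ p.1 := by
    simpa only [sub_zero] using loziMap_fst_le_sub ha hb le_rfl ((add_zero _).trans_le hc) hp
  exact ⟨hfst.trans hp.1, hp.1⟩

theorem lozi_escape_to_infinity_general (ha : 1 ≤ a) (hb : 0 ≤ b) (hδ : 0 < δ)
    (hc : 1 + δ ≤ c * (a + b - 1)) (hp : p ≤ (-c, -c)) :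
    (∀ n : ℕ, ((loziMap a b)^[n + 1] p).1 ≤ ((loziMap a b)^[n] p).1 - δ) ∧
    Tendsto (fun n : ℕ => ((loziMap a b)^[n] p).1) atTop atBot ∧
    ∀ s : Set (ℝ × ℝ), BddBelow s → ∀ᶠ n in atTop, (loziMap a b)^[n] p ∉ s := by
  have hquadrant (n : ℕ) : (loziMap a b)^[n] p ≤ (-c, -c) :=
    (mapsTo_loziMap_Iic ha hb (by linarith)).iterate n hp
  have hdrop (n : ℕ) : ((loziMap a b)^[n + 1] p).1 ≤ ((loziMap a b)^[n] p).1 - δ := by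
    rw [Function.iterate_succ_apply']
    exact loziMap_fst_le_sub ha hb hδ.le hc (hquadrant n)
  have hlim : Tendsto (fun n : ℕ => ((loziMap a b)^[n] p).1) atTop atBot :=
    tendsto_atBot_of_succ_le_sub hδ hdrop
  exact ⟨hdrop, hlim, fun _ hs => eventually_notMem_of_tendsto_fst_atBot hlim hs⟩

end loziMap

/-- Escape to infinity for the Lozi map with `a = 2`, `b = 0.5`: if `x₀ ≤ −1` and
`y₀ ≤ −1`, then the first coordinate decreases by at least `0.5` at each step and tends
to `−∞`; in particular the orbit leaves the square `Q = [−4,4] × [−4,4]`. -/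
theorem lozi_escape_to_infinity (x₀ y₀ : ℝ) (hx : x₀ ≤ -1) (hy : y₀ ≤ -1) :
    (∀ n : ℕ, (lozi^[n + 1] (x₀, y₀)).1 ≤ (lozi^[n] (x₀, y₀)).1 - 0.5) ∧
    Filter.Tendsto (fun n : ℕ => (lozi^[n] (x₀, y₀)).1) Filter.atTop Filter.atBot ∧
    ∃ n : ℕ, lozi^[n] (x₀, y₀) ∉ Set.Icc (-4 : ℝ) 4 ×ˢ Set.Icc (-4 : ℝ) 4 := by
  rw [lozi_eq_loziMap]
  obtain ⟨hdrop, hlim, hescape⟩ := lozi_escape_to_infinity_general (a := 2) (b := 0.5) (c := 1)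
    (δ := 0.5) (p := (x₀, y₀)) (by norm_num) (by norm_num) (by norm_num) (by norm_num) ⟨hx, hy⟩
  have hsquare : BddBelow (Icc (-4 : ℝ) 4 ×ˢ Icc (-4 : ℝ) 4) := by
    rw [Icc_prod_Icc]
    exact bddBelow_Icc
  exact ⟨hdrop, hlim, (hescape _ hsquare).exists⟩
end
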